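/- Let d_1, d_2 be positive integers, let A_1, A_2 > 0, let S(q) = A_1 e^{−q_2} − A_2 e^{q_1 − 2q_2}, and let H be the associated Ricci-flat cohomogeneity one Hamiltonian on ℝ²×ℝ². Then there do not exist C¹ functions F_1, F_2, F_0 on ℝ², with F_1 and F_2 not both identically zero, such that F(q,p) := F_1(q)p_1 + F_2(q)p_2 + F_0(q) satisfies {F,H} = 0 at every point of V_H. -/

import Mathlib

/-- Partial derivative in the `i`-th `q`-coordinate. -/
noncomputable def pderivQ (F : (Fin 2 → ℝ) → (Fin 2 → ℝ) → ℝ) (i : Fin 2)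
    (q p : Fin 2 → ℝ) : ℝ :=
  deriv (fun t => F (Function.update q i t) p) (q i)

/-- Partial derivative in the `i`-th `p`-coordinate. -/
noncomputable def pderivP (F : (Fin 2 → ℝ) → (Fin 2 → ℝ) → ℝ) (i : Fin 2)
    (q p : Fin 2 → ℝ) : ℝ :=
  deriv (fun t => F q (Function.update p i t)) (p i)

/-- Canonical Poisson bracket on `ℝ² × ℝ²`. -/
noncomputable def poisson (F G : (Fin 2 → ℝ) → (Fin 2 → ℝ) → ℝ) (q p : Fin 2 → ℝ) : ℝ :=
  ∑ i : Fin 2, (pderivQ F i q p * pderivP G i q p - pderivP F i q p * pderivQ G i q p)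

/-- Relative volume `v(q) = exp((d₁q₁ + d₂q₂)/2)`. -/
noncomputable def vol (d1 d2 : ℕ) (q : Fin 2 → ℝ) : ℝ :=
  Real.exp (((d1 : ℝ) * q 0 + (d2 : ℝ) * q 1) / 2)

/-- The quadratic form `J(p) = (p₁+p₂)²/(n−1) − p₁²/d₁ − p₂²/d₂`, `n = d₁+d₂`. -/
noncomputable def Jform (d1 d2 : ℕ) (p : Fin 2 → ℝ) : ℝ :=
  (1 / ((d1 : ℝ) + (d2 : ℝ) - 1)) * (p 0 + p 1) ^ 2 - (p 0) ^ 2 / (d1 : ℝ) -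
    (p 1) ^ 2 / (d2 : ℝ)

/-- The Ricci-flat cohomogeneity one Hamiltonian `H(q,p) = v(q)⁻¹ J(p) − S(q) v(q)`. -/
noncomputable def Ham (d1 d2 : ℕ) (S : (Fin 2 → ℝ) → ℝ) (q p : Fin 2 → ℝ) : ℝ :=
  (vol d1 d2 q)⁻¹ * Jform d1 d2 p - S q * vol d1 d2 q


/-- A Laurent polynomial of degree one vanishing on the range of `x ↦ exp (c * x)` is zero. -/
lemma laurent_exp_coeff_eq_zero {c r₀ r₁ r₂ : ℝ} (hc : c ≠ 0)
    (h : ∀ x : ℝ, r₀ + r₁ * Real.exp (c * x) + r₂ * Real.exp (-(c * x)) = 0) :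
    r₀ = 0 ∧ r₁ = 0 ∧ r₂ = 0 := by
  have key : ∀ X : ℝ, 0 < X → r₀ + r₁ * X + r₂ * X⁻¹ = 0 := by
    intro X hX
    have := h (Real.log X / c)
    rwa [mul_div_cancel₀ _ hc, Real.exp_neg, Real.exp_log hX] at this
  have h1 := key 1 one_pos
  have h2 := key 2 two_pos
  have h4 := key 4 four_pos
  norm_num at h1 h2 h4
  refine ⟨?_, ?_, ?_⟩ <;> linarith

/-- Constraints on the coefficients when both `f' + a f` and `f' + (a + c) f` are exponential. -/
lemma coeff_of_exponential_pair {f f' : ℝ → ℝ} (hf : ∀ x, HasDerivAt f (f' x) x)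
    {a c m M k K : ℝ} (hc : c ≠ 0)
    (h₁ : ∀ x, f' x + a * f x = m + M * Real.exp (c * x))
    (h₂ : ∀ x, f' x + (a + c) * f x = k + K * Real.exp (-(c * x))) :
    M * (2 * c + a) = 0 ∧ K * (a - c) = 0 ∧ c * m = a * (k - m) ∧
      ∀ x, c * f x = k - m + K * Real.exp (-(c * x)) - M * Real.exp (c * x) := by
  have hform : ∀ x, c * f x = k - m + K * Real.exp (-(c * x)) - M * Real.exp (c * x) := by
    intro x
    linarith [h₁ x, h₂ x]
  have hder : ∀ x, c * f' x = K * (Real.exp (-(c * x)) * -c) - M * (Real.exp (c * x) * c) := by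
    intro x
    have hlin : HasDerivAt (fun x : ℝ => c * x) c x := by
      simpa using (hasDerivAt_id x).const_mul c
    have h := ((hlin.neg.exp.const_mul K).const_add (k - m)).sub (hlin.exp.const_mul M)
    have h' := (hf x).const_mul c
    rw [funext hform] at h'
    exact h'.unique h
  obtain ⟨h0, h1, h2⟩ := laurent_exp_coeff_eq_zero
    (r₀ := a * (k - m) - c * m) (r₁ := -(M * (2 * c + a))) (r₂ := K * (a - c)) hc
    (by
      intro x
      linear_combination c * h₁ x - hder x - a * hform x)
  refine ⟨?_, ?_, by linarith, hform⟩
  · exact neg_eq_zero.mp h1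
  · exact h2

/-- Separation of variables in `A₁ (u x + w y) = A₂ (u' x + w' y) exp (c (x - y))`. -/
lemma exists_exponential_form {A₁ A₂ c : ℝ} (hA₁ : A₁ ≠ 0) (hA₂ : A₂ ≠ 0) (hc : c ≠ 0)
    {u w u' w' : ℝ → ℝ}
    (h : ∀ x y, A₁ * (u x + w y) = A₂ * (u' x + w' y) * Real.exp (c * x - c * y)) :
    ∃ K L k m : ℝ, (∀ x, u' x = k + K * Real.exp (-(c * x))) ∧
      (∀ y, w' y = -k + L * Real.exp (c * y)) ∧
      (∀ x, u x = m + A₂ / A₁ * L * Real.exp (c * x)) ∧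
      (∀ y, w y = -m + A₂ / A₁ * K * Real.exp (-(c * y))) := by
  have hE (x y : ℝ) : Real.exp (c * x - c * y) = Real.exp (c * x) * Real.exp (-(c * y)) := by
    rw [← Real.exp_add, sub_eq_add_neg]
  have hcancel (x : ℝ) : Real.exp (c * x) * Real.exp (-(c * x)) = 1 := by
    rw [← Real.exp_add, add_neg_cancel, Real.exp_zero]
  simp only [hE] at h
  obtain ⟨C, hC⟩ : ∃ C, C = A₂ / A₁ := ⟨_, rfl⟩
  have hsep (x y : ℝ) :
      u x + w y = C * (u' x + w' y) * (Real.exp (c * x) * Real.exp (-(c * y))) := by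
    rw [hC]
    field_simp
    linear_combination h x y
  rw [← hC]
  have hC0 : C ≠ 0 := hC ▸ div_ne_zero hA₂ hA₁
  have hu0 (x : ℝ) : u x + w 0 = C * (u' x + w' 0) * Real.exp (c * x) := by
    simpa using hsep x 0
  have hw0 (y : ℝ) : u 0 + w y = C * (u' 0 + w' y) * Real.exp (-(c * y)) := by
    simpa using hsep 0 y
  have h00 : u 0 + w 0 = C * (u' 0 + w' 0) := by simpa using hsep 0 0
  have hdiff (x y : ℝ) :
      (u' x - u' 0) * Real.exp (c * x) * (1 - Real.exp (-(c * y))) +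
        (w' y - w' 0) * Real.exp (-(c * y)) * (1 - Real.exp (c * x)) =
      (u' 0 + w' 0) * (1 - Real.exp (c * x)) * (1 - Real.exp (-(c * y))) := by
    apply mul_left_cancel₀ hC0
    linear_combination hsep x y - hu0 x - hw0 y + h00
  have hE1 : Real.exp c ≠ 1 := by simpa using hc
  have hE1' : Real.exp c - 1 ≠ 0 := sub_ne_zero.mpr hE1
  have hcc : Real.exp c * Real.exp (-c) = 1 := by simpa using hcancel 1
  obtain ⟨K, hK⟩ : ∃ K, (Real.exp c - 1) * (u' 0 + w' 0 - K) = w' 1 - w' 0 :=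
    ⟨u' 0 + w' 0 - (w' 1 - w' 0) / (Real.exp c - 1), by field_simp; ring⟩
  have hP (x : ℝ) : (u' x - u' 0) * Real.exp (c * x) = K * (1 - Real.exp (c * x)) := by
    have h1 := hdiff x 1
    rw [mul_one] at h1
    apply mul_left_cancel₀ hE1'
    linear_combination Real.exp c * h1 + (1 - Real.exp (c * x)) * hK -
      (-(u' x - u' 0) * Real.exp (c * x) + (w' 1 - w' 0) * (1 - Real.exp (c * x)) +
        (u' 0 + w' 0) * (1 - Real.exp (c * x))) * hcc
  have hR (y : ℝ) : (w' y - w' 0) * Real.exp (-(c * y)) =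
      (u' 0 + w' 0 - K) * (1 - Real.exp (-(c * y))) := by
    have h1 := hdiff 1 y
    have h2 := hP 1
    rw [mul_one] at h1 h2
    apply mul_left_cancel₀ hE1'
    linear_combination -h1 + (1 - Real.exp (-(c * y))) * h2
  have hu' (x : ℝ) : u' x = (u' 0 - K) + K * Real.exp (-(c * x)) := by
    linear_combination Real.exp (-(c * x)) * hP x - (u' x - u' 0 + K) * hcancel x
  have hw' (y : ℝ) : w' y = -(u' 0 - K) + (u' 0 + w' 0 - K) * Real.exp (c * y) := by
    linear_combination Real.exp (c * y) * hR y -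
      (w' y - w' 0 + (u' 0 + w' 0 - K)) * hcancel y
  refine ⟨K, u' 0 + w' 0 - K, u' 0 - K, C * K - w 0, hu', hw', fun x => ?_, fun y => ?_⟩
  · linear_combination hu0 x + C * hP x
  · linear_combination hw0 y + C * hR y - h00

lemma eq_zero_of_exponential_separation {f g f' g' : ℝ → ℝ}
    (hf : ∀ x, HasDerivAt f (f' x) x) (hg : ∀ y, HasDerivAt g (g' y) y)
    {A₁ A₂ a b c : ℝ} (hA₁ : 0 < A₁) (hA₂ : 0 < A₂) (hc : 0 < c) (hba : b < a)
    (hab : 0 < a + b)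
    (h : ∀ x y, A₁ * (f' x + g' y + a * f x + b * g y) =
      A₂ * (f' x + g' y + (a + c) * f x + (b - c) * g y) * Real.exp (c * x - c * y)) :
    (∀ x, f x = 0) ∧ ∀ y, g y = 0 := by
  obtain ⟨K, L, k, m, hu', hw', hu, hw⟩ := exists_exponential_form (A₁ := A₁) (A₂ := A₂)
    (u := fun x => f' x + a * f x) (w := fun y => g' y + b * g y)
    (u' := fun x => f' x + (a + c) * f x) (w' := fun y => g' y + (b + -c) * g y) hA₁.ne' hA₂.ne'
    hc.ne'
    (by intro x y; linear_combination h x y)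
  obtain ⟨e1, e2, e3, e4⟩ := coeff_of_exponential_pair hf hc.ne' hu hu'
  obtain ⟨e5, e6, e7, e8⟩ := coeff_of_exponential_pair (c := -c) hg (by linarith)
    (by simpa using hw) (by simpa using hw')
  have hC : A₂ / A₁ ≠ 0 := (div_pos hA₂ hA₁).ne'
  have hK : K = 0 := by
    by_contra hK
    have h1 : a - c = 0 := by simpa [hK] using e2
    have h2 : 2 * -c + b = 0 := by simpa only [mul_eq_zero, hC, hK, false_or] using e5
    linarith
  have hL : L = 0 := by
    by_contra hL
    have h1 : b - -c = 0 := by simpa only [mul_eq_zero, hL, false_or] using e6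
    have h2 : 2 * c + a = 0 := by simpa only [mul_eq_zero, hC, hL, false_or] using e1
    linarith
  have hkm : k - m = 0 := by
    have : (a + b) * (k - m) = 0 := by linear_combination -e3 + e7
    simpa [hab.ne'] using this
  subst hK hL
  refine ⟨fun x => ?_, fun y => ?_⟩
  · simpa [hkm, hc.ne'] using e4 x
  · have hkm' : -k + m = 0 := by linarith
    simpa [hkm', hc.ne'] using e8 y

/-- A quadratic polynomial vanishing on the hyperbola `s * t = w` is a multiple of `s * t - w`. -/
lemma quadratic_coeff_of_vanish_on_hyperbola {a b c l m e w : ℝ}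
    (h : ∀ s t : ℝ, s * t = w → a * s ^ 2 + b * t ^ 2 + c * (s * t) + l * s + m * t + e = 0) :
    a = 0 ∧ b = 0 ∧ c * w + e = 0 := by
  by_cases hw : w = 0
  · subst hw
    have h0 := h 0 0 (by ring)
    have h1 := h 1 0 (by ring)
    have h2 := h (-1) 0 (by ring)
    have h3 := h 0 1 (by ring)
    have h4 := h 0 (-1) (by ring)
    refine ⟨?_, ?_, ?_⟩ <;> linarith
  · have h1 := h 1 w (by ring)
    have h1' := h (-1) (-w) (by ring)
    have h2 := h 2 (w / 2) (by ring)
    have h2' := h (-2) (-(w / 2)) (by ring)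
    have h3 := h 3 (w / 3) (by ring)
    have h3' := h (-3) (-(w / 3)) (by ring)
    have hb : b * w ^ 2 = 0 := by linarith
    have hb' : b = 0 := by simpa [hw] using hb
    subst hb'
    refine ⟨?_, rfl, ?_⟩ <;> linarith

lemma hasDerivAt_comp_update {F : (Fin 2 → ℝ) → ℝ} {q : Fin 2 → ℝ} (hF : DifferentiableAt ℝ F q)
    (i : Fin 2) :
    HasDerivAt (fun t => F (Function.update q i t)) (fderiv ℝ F q (Pi.single i 1)) (q i) := by
  have h : HasFDerivAt F (fderiv ℝ F q) (Function.update q i (q i)) := by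
    rw [Function.update_eq_self]
    exact hF.hasFDerivAt
  exact h.comp_hasDerivAt (q i) (hasDerivAt_update q i (q i))

lemma pderivQ_linear {F₁ F₂ F₀ : (Fin 2 → ℝ) → ℝ} {q : Fin 2 → ℝ}
    (h₁ : DifferentiableAt ℝ F₁ q) (h₂ : DifferentiableAt ℝ F₂ q) (h₀ : DifferentiableAt ℝ F₀ q)
    (i : Fin 2) (p : Fin 2 → ℝ) :
    pderivQ (fun q' p' => F₁ q' * p' 0 + F₂ q' * p' 1 + F₀ q') i q p =
      fderiv ℝ F₁ q (Pi.single i 1) * p 0 + fderiv ℝ F₂ q (Pi.single i 1) * p 1 +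
        fderiv ℝ F₀ q (Pi.single i 1) :=
  ((((hasDerivAt_comp_update h₁ i).mul_const (p 0)).add
    ((hasDerivAt_comp_update h₂ i).mul_const (p 1))).add (hasDerivAt_comp_update h₀ i)).deriv

lemma pderivP_linear_zero (F₁ F₂ F₀ : (Fin 2 → ℝ) → ℝ) (q p : Fin 2 → ℝ) :
    pderivP (fun q' p' => F₁ q' * p' 0 + F₂ q' * p' 1 + F₀ q') 0 q p = F₁ q := by
  simp [pderivP]

lemma pderivP_linear_one (F₁ F₂ F₀ : (Fin 2 → ℝ) → ℝ) (q p : Fin 2 → ℝ) :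
    pderivP (fun q' p' => F₁ q' * p' 0 + F₂ q' * p' 1 + F₀ q') 1 q p = F₂ q := by
  simp [pderivP]

lemma hasDerivAt_vol_update (d1 d2 : ℕ) (q : Fin 2 → ℝ) (i : Fin 2) :
    HasDerivAt (fun t => vol d1 d2 (Function.update q i t))
      (vol d1 d2 q * (![(d1 : ℝ), (d2 : ℝ)] i / 2)) (q i) := by
  fin_cases i
  · simpa [vol] using
      ((((hasDerivAt_id (q 0)).const_mul (d1 : ℝ)).add_const ((d2 : ℝ) * q 1)).div_const 2).exp
  · simpa [vol] using
      ((((hasDerivAt_id (q 1)).const_mul (d2 : ℝ)).const_add ((d1 : ℝ) * q 0)).div_const 2).exp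

lemma vol_pos (d1 d2 : ℕ) (q : Fin 2 → ℝ) : 0 < vol d1 d2 q := Real.exp_pos _

lemma pderivQ_Ham {d1 d2 : ℕ} {S : (Fin 2 → ℝ) → ℝ} {q : Fin 2 → ℝ} {i : Fin 2} {S' : ℝ}
    (hS : HasDerivAt (fun t => S (Function.update q i t)) S' (q i)) (p : Fin 2 → ℝ) :
    pderivQ (Ham d1 d2 S) i q p =
      -(![(d1 : ℝ), (d2 : ℝ)] i / 2 * ((vol d1 d2 q)⁻¹ * Jform d1 d2 p)) -
        (S' + S q * (![(d1 : ℝ), (d2 : ℝ)] i / 2)) * vol d1 d2 q := by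
  have hv := hasDerivAt_vol_update d1 d2 q i
  have hne : vol d1 d2 (Function.update q i (q i)) ≠ 0 := (vol_pos _ _ _).ne'
  have h := ((hv.inv hne).mul_const (Jform d1 d2 p)).sub (hS.mul hv)
  refine h.deriv.trans ?_
  rw [Function.update_eq_self] at hne ⊢
  field_simp

lemma hasDerivAt_product_of_linear_update (X Y p : Fin 2 → ℝ) (i : Fin 2) :
    HasDerivAt (fun t => (X 0 * Function.update p i t 0 + X 1 * Function.update p i t 1) *
        (Y 0 * Function.update p i t 0 + Y 1 * Function.update p i t 1))
      (X i * (Y 0 * p 0 + Y 1 * p 1) + (X 0 * p 0 + X 1 * p 1) * Y i) (p i) := by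
  fin_cases i
  · simpa using (((hasDerivAt_id (p 0)).const_mul (X 0)).add_const (X 1 * p 1)).fun_mul
      (((hasDerivAt_id (p 0)).const_mul (Y 0)).add_const (Y 1 * p 1))
  · simpa using (((hasDerivAt_id (p 1)).const_mul (X 1)).const_add (X 0 * p 0)).fun_mul
      (((hasDerivAt_id (p 1)).const_mul (Y 1)).const_add (Y 0 * p 0))

lemma pderivP_Ham {d1 d2 : ℕ} {X Y : Fin 2 → ℝ}
    (hJ : ∀ p, Jform d1 d2 p = (X 0 * p 0 + X 1 * p 1) * (Y 0 * p 0 + Y 1 * p 1))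
    (S : (Fin 2 → ℝ) → ℝ) (i : Fin 2) (q p : Fin 2 → ℝ) :
    pderivP (Ham d1 d2 S) i q p = (vol d1 d2 q)⁻¹ *
      (X i * (Y 0 * p 0 + Y 1 * p 1) + (X 0 * p 0 + X 1 * p 1) * Y i) := by
  have h := ((hasDerivAt_product_of_linear_update X Y p i).const_mul
    (vol d1 d2 q)⁻¹).sub_const (S q * vol d1 d2 q)
  simp only [← hJ] at h
  exact h.deriv

/-- Null directions of the form `J`, with the positivity facts the obstruction rests on. -/
lemma exists_null_frame {d1 d2 : ℕ} (hd1 : 0 < d1) (hd2 : 0 < d2) :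
    ∃ X Y : Fin 2 → ℝ,
      (∀ p, Jform d1 d2 p = (X 0 * p 0 + X 1 * p 1) * (Y 0 * p 0 + Y 1 * p 1)) ∧
      X 0 * Y 1 - X 1 * Y 0 ≠ 0 ∧ 0 < X 0 - X 1 ∧ Y 0 - Y 1 = -(X 0 - X 1) ∧
      (d1 : ℝ) * Y 0 + ((d2 : ℝ) - 1) * Y 1 < (d1 : ℝ) * X 0 + ((d2 : ℝ) - 1) * X 1 ∧
      0 < ((d1 : ℝ) * X 0 + ((d2 : ℝ) - 1) * X 1) +
        ((d1 : ℝ) * Y 0 + ((d2 : ℝ) - 1) * Y 1) := by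
  have h1 : (1 : ℝ) ≤ d1 := by exact_mod_cast hd1
  have h2 : (1 : ℝ) ≤ d2 := by exact_mod_cast hd2
  generalize hx : (d1 : ℝ) = x at *
  generalize hy : (d2 : ℝ) = y at *
  have hx0 : 0 < x := by linarith
  have hy0 : 0 < y := by linarith
  have hn : 0 < x + y := by linarith
  have hn1 : 0 < x + y - 1 := by linarith
  obtain ⟨a, ha, haa⟩ : ∃ a : ℝ, 0 < a ∧ a ^ 2 = 1 / ((x + y) * (x + y - 1)) :=
    ⟨√(1 / ((x + y) * (x + y - 1))), by positivity, Real.sq_sqrt (by positivity)⟩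
  obtain ⟨r, hr, hrr⟩ : ∃ r : ℝ, 0 < r ∧ r ^ 2 = x * y / (x + y) :=
    ⟨√(x * y / (x + y)), by positivity, Real.sq_sqrt (by positivity)⟩
  refine ⟨![a + r / x, a - r / y], ![a - r / x, a + r / y], fun p => ?_, ?_, ?_, ?_, ?_, ?_⟩ <;>
    simp only [Matrix.cons_val_zero, Matrix.cons_val_one]
  · have : ((a + r / x) * p 0 + (a - r / y) * p 1) * ((a - r / x) * p 0 + (a + r / y) * p 1) =
        a ^ 2 * (p 0 + p 1) ^ 2 - r ^ 2 * (p 0 / x - p 1 / y) ^ 2 := by ring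
    rw [this, haa, hrr, Jform, hx, hy]
    field_simp
    ring
  · have : (a + r / x) * (a + r / y) - (a - r / y) * (a - r / x) = 2 * a * (r / x + r / y) := by
      ring
    rw [this]
    positivity
  · have : a + r / x - (a - r / y) = r / x + r / y := by ring
    rw [this]
    positivity
  · ring
  · have : x * (a + r / x) + (y - 1) * (a - r / y) - (x * (a - r / x) + (y - 1) * (a + r / y)) =
        2 * (r / y) := by
      field_simp
      ring
    have : 0 < r / y := by positivity
    linarith
  · have : x * (a + r / x) + (y - 1) * (a - r / y) + (x * (a - r / x) + (y - 1) * (a + r / y)) =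
        2 * (a * (x + y - 1)) := by
      ring
    rw [this]
    positivity

lemma continuousLinearMap_apply_fin_two (L : (Fin 2 → ℝ) →L[ℝ] ℝ) (X : Fin 2 → ℝ) :
    L X = L (Pi.single 0 1) * X 0 + L (Pi.single 1 1) * X 1 := by
  have h : X = X 0 • Pi.single 0 1 + X 1 • Pi.single 1 1 := by
    ext i
    fin_cases i <;> simp
  conv_lhs => rw [h]
  simp only [map_add, map_smul, smul_eq_mul]
  ring

/-- Linear first integrals on `V_H` are conformal Killing fields: their null components depend on
one null coordinate each and satisfy a divergence-type equation. -/
lemma null_equations_of_poisson_eq_zero {d1 d2 : ℕ} {X Y : Fin 2 → ℝ}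
    (hJ : ∀ p, Jform d1 d2 p = (X 0 * p 0 + X 1 * p 1) * (Y 0 * p 0 + Y 1 * p 1))
    (hdet : X 0 * Y 1 - X 1 * Y 0 ≠ 0)
    {S : (Fin 2 → ℝ) → ℝ} {F₁ F₂ F₀ : (Fin 2 → ℝ) → ℝ} {q : Fin 2 → ℝ} {S₁ S₂ : ℝ}
    (hS₁ : HasDerivAt (fun t => S (Function.update q 0 t)) S₁ (q 0))
    (hS₂ : HasDerivAt (fun t => S (Function.update q 1 t)) S₂ (q 1))
    (h₁ : DifferentiableAt ℝ F₁ q) (h₂ : DifferentiableAt ℝ F₂ q) (h₀ : DifferentiableAt ℝ F₀ q)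
    (h : ∀ p, Ham d1 d2 S q p = 0 →
      poisson (fun q' p' => F₁ q' * p' 0 + F₂ q' * p' 1 + F₀ q') (Ham d1 d2 S) q p = 0) :
    fderiv ℝ F₁ q Y * Y 1 - fderiv ℝ F₂ q Y * Y 0 = 0 ∧
    fderiv ℝ F₂ q X * X 0 - fderiv ℝ F₁ q X * X 1 = 0 ∧
    (fderiv ℝ F₁ q X * Y 1 - fderiv ℝ F₂ q X * Y 0 +
      (fderiv ℝ F₂ q Y * X 0 - fderiv ℝ F₁ q Y * X 1)) * S q +
      (X 0 * Y 1 - X 1 * Y 0) * (F₁ q * (d1 * S q + S₁) + F₂ q * (d2 * S q + S₂)) = 0 := by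
  have hv := vol_pos d1 d2 q
  obtain ⟨D, hD⟩ : ∃ D, D = X 0 * Y 1 - X 1 * Y 0 := ⟨_, rfl⟩
  have hD0 : D ≠ 0 := hD ▸ hdet
  have hX (L : (Fin 2 → ℝ) →L[ℝ] ℝ) := continuousLinearMap_apply_fin_two L X
  have hY (L : (Fin 2 → ℝ) →L[ℝ] ℝ) := continuousLinearMap_apply_fin_two L Y
  obtain ⟨e1, e2, e3⟩ := quadratic_coeff_of_vanish_on_hyperbola
    (a := D * (fderiv ℝ F₁ q Y * Y 1 - fderiv ℝ F₂ q Y * Y 0))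
    (b := D * (fderiv ℝ F₂ q X * X 0 - fderiv ℝ F₁ q X * X 1))
    (c := D * (fderiv ℝ F₁ q X * Y 1 - fderiv ℝ F₂ q X * Y 0 +
      (fderiv ℝ F₂ q Y * X 0 - fderiv ℝ F₁ q Y * X 1)))
    (l := D * fderiv ℝ F₀ q Y) (m := D * fderiv ℝ F₀ q X)
    (e := vol d1 d2 q ^ 2 * (F₁ q * (d1 * S q + S₁) + F₂ q * (d2 * S q + S₂)))
    (w := S q * vol d1 d2 q ^ 2 / D ^ 2)
    (by
      intro s t hst
      have hst' : D ^ 2 * (s * t) = S q * vol d1 d2 q ^ 2 := by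
        rw [hst]
        field_simp
      have hXp : X 0 * (s * Y 1 - t * X 1) + X 1 * (t * X 0 - s * Y 0) = D * s := by
        rw [hD]
        ring
      have hYp : Y 0 * (s * Y 1 - t * X 1) + Y 1 * (t * X 0 - s * Y 0) = D * t := by
        rw [hD]
        ring
      have hJp : Jform d1 d2 ![s * Y 1 - t * X 1, t * X 0 - s * Y 0] =
          S q * vol d1 d2 q ^ 2 := by
        rw [hJ]
        simp only [Matrix.cons_val_zero, Matrix.cons_val_one]
        rw [hXp, hYp, ← hst']
        ring
      have hp := h ![s * Y 1 - t * X 1, t * X 0 - s * Y 0] (by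
        rw [Ham, hJp]
        field_simp
        ring)
      rw [poisson, Fin.sum_univ_two, pderivQ_linear h₁ h₂ h₀, pderivQ_linear h₁ h₂ h₀,
        pderivP_linear_zero, pderivP_linear_one, pderivP_Ham hJ, pderivP_Ham hJ,
        pderivQ_Ham hS₁, pderivQ_Ham hS₂, hJp] at hp
      simp only [Matrix.cons_val_zero, Matrix.cons_val_one] at hp
      rw [hXp, hYp] at hp
      field_simp at hp
      rw [hX (fderiv ℝ F₁ q), hX (fderiv ℝ F₂ q), hX (fderiv ℝ F₀ q), hY (fderiv ℝ F₁ q),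
        hY (fderiv ℝ F₂ q), hY (fderiv ℝ F₀ q)]
      linear_combination hp / 2)
  refine ⟨by simpa [hD0] using e1, by simpa [hD0] using e2, ?_⟩
  rw [← hD]
  apply mul_left_cancel₀ (pow_ne_zero 2 hv.ne')
  field_simp at e3
  linear_combination e3

lemma apply_add_smul_of_fderiv_eq_zero {φ : (Fin 2 → ℝ) → ℝ} (hφ : Differentiable ℝ φ)
    {Y : Fin 2 → ℝ} (h : ∀ q, fderiv ℝ φ q Y = 0) (q : Fin 2 → ℝ) (t : ℝ) :
    φ (q + t • Y) = φ q := by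
  have hder (t : ℝ) : HasDerivAt (fun t : ℝ => φ (q + t • Y)) 0 t := by
    have h1 : HasDerivAt (fun t : ℝ => q + t • Y) Y t := by
      simpa using ((hasDerivAt_id t).smul_const Y).const_add q
    have h2 := (hφ (q + t • Y)).hasFDerivAt.comp_hasDerivAt t h1
    rwa [h] at h2
  have := is_const_of_deriv_eq_zero (fun t => (hder t).differentiableAt)
    (fun t => (hder t).deriv) t 0
  simpa using this

lemma fderiv_add_smul_of_fderiv_eq_zero {φ : (Fin 2 → ℝ) → ℝ} (hφ : Differentiable ℝ φ)
    {Y : Fin 2 → ℝ} (h : ∀ q, fderiv ℝ φ q Y = 0) (q : Fin 2 → ℝ) (t : ℝ) :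
    fderiv ℝ φ (q + t • Y) = fderiv ℝ φ q := by
  rw [← fderiv_comp_add_right]
  congr 1
  ext q'
  exact apply_add_smul_of_fderiv_eq_zero hφ h q' t

lemma hasDerivAt_comp_smul {φ : (Fin 2 → ℝ) → ℝ} (hφ : Differentiable ℝ φ) (X : Fin 2 → ℝ)
    (x : ℝ) : HasDerivAt (fun x : ℝ => φ (x • X)) (fderiv ℝ φ (x • X) X) x := by
  have h1 : HasDerivAt (fun t : ℝ => t • X) X x := by
    simpa using (hasDerivAt_id x).smul_const X
  exact (hφ (x • X)).hasFDerivAt.comp_hasDerivAt x h1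

lemma fderiv_mul_const_sub_mul_const {F G : (Fin 2 → ℝ) → ℝ} (hF : Differentiable ℝ F)
    (hG : Differentiable ℝ G) (a b : ℝ) (q X : Fin 2 → ℝ) :
    fderiv ℝ (fun q => F q * a - G q * b) q X = fderiv ℝ F q X * a - fderiv ℝ G q X * b := by
  have h := ((hF q).hasFDerivAt.mul_const a).sub ((hG q).hasFDerivAt.mul_const b)
  have h' : HasFDerivAt (fun q => F q * a - G q * b) _ q := h
  rw [h'.fderiv]
  simp only [sub_apply, smul_apply, smul_eq_mul]
  ring

/-- Dancer–Wang: for `S(q) = A₁e^{−q₂} − A₂e^{q₁−2q₂}`, there is no nontrivial first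
integral linear in momenta on `V_H`. -/
theorem no_linear_first_integral_case_ii
    (d1 d2 : ℕ) (hd1pos : 0 < d1) (hd2pos : 0 < d2)
    (A1 A2 : ℝ) (hA1 : 0 < A1) (hA2 : 0 < A2)
    (S : (Fin 2 → ℝ) → ℝ)
    (hS : S = fun q => A1 * Real.exp (-(q 1)) - A2 * Real.exp (q 0 - 2 * q 1)) :
    ¬ ∃ F1 F2 F0 : (Fin 2 → ℝ) → ℝ,
      ContDiff ℝ 1 F1 ∧ ContDiff ℝ 1 F2 ∧ ContDiff ℝ 1 F0 ∧
      (F1 ≠ 0 ∨ F2 ≠ 0) ∧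
      ∀ q p : Fin 2 → ℝ, Ham d1 d2 S q p = 0 →
        poisson (fun q' p' => F1 q' * p' 0 + F2 q' * p' 1 + F0 q') (Ham d1 d2 S) q p = 0 := by
  rintro ⟨F₁, F₂, F₀, hF₁, hF₂, hF₀, hne, hpoisson⟩
  replace hF₁ := hF₁.differentiable one_ne_zero
  replace hF₂ := hF₂.differentiable one_ne_zero
  replace hF₀ := hF₀.differentiable one_ne_zero
  obtain ⟨X, Y, hJ, hdet, hc, hYc, hlt, hpos⟩ := exists_null_frame hd1pos hd2pos
  have hS₁ (q : Fin 2 → ℝ) : HasDerivAt (fun t => S (Function.update q 0 t))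
      (-(A2 * Real.exp (q 0 - 2 * q 1))) (q 0) := by
    rw [hS]
    simpa using ((((hasDerivAt_id (q 0)).sub_const (2 * q 1)).exp.const_mul A2).const_sub
      (A1 * Real.exp (-(q 1))))
  have hS₂ (q : Fin 2 → ℝ) : HasDerivAt (fun t => S (Function.update q 1 t))
      (-(A1 * Real.exp (-(q 1))) + 2 * (A2 * Real.exp (q 0 - 2 * q 1))) (q 1) := by
    rw [hS]
    have h := ((hasDerivAt_id' (q 1)).fun_neg.exp.const_mul A1).fun_sub
      ((((hasDerivAt_id' (q 1)).const_mul 2).const_sub (q 0)).exp.const_mul A2)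
    simp only [Function.update_self, Function.update_of_ne zero_ne_one]
    refine h.congr_deriv ?_
    ring
  have heq (q : Fin 2 → ℝ) := null_equations_of_poisson_eq_zero hJ hdet (hS₁ q) (hS₂ q) (hF₁ q)
    (hF₂ q) (hF₀ q) (hpoisson q)
  obtain ⟨f, hf⟩ : ∃ f : (Fin 2 → ℝ) → ℝ, f = fun q => F₁ q * Y 1 - F₂ q * Y 0 := ⟨_, rfl⟩
  obtain ⟨g, hg⟩ : ∃ g : (Fin 2 → ℝ) → ℝ, g = fun q => F₂ q * X 0 - F₁ q * X 1 := ⟨_, rfl⟩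
  have hfd : Differentiable ℝ f := by
    rw [hf]
    fun_prop
  have hgd : Differentiable ℝ g := by
    rw [hg]
    fun_prop
  have hf' (q Z : Fin 2 → ℝ) : fderiv ℝ f q Z = fderiv ℝ F₁ q Z * Y 1 - fderiv ℝ F₂ q Z * Y 0 :=
    hf ▸ fderiv_mul_const_sub_mul_const hF₁ hF₂ _ _ q Z
  have hg' (q Z : Fin 2 → ℝ) : fderiv ℝ g q Z = fderiv ℝ F₂ q Z * X 0 - fderiv ℝ F₁ q Z * X 1 :=
    hg ▸ fderiv_mul_const_sub_mul_const hF₂ hF₁ _ _ q Z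
  simp only [← hf', ← hg'] at heq
  have hfY (q : Fin 2 → ℝ) := (heq q).1
  have hgX (q : Fin 2 → ℝ) := (heq q).2.1
  obtain ⟨hf0, hg0⟩ := eq_zero_of_exponential_separation
    (hasDerivAt_comp_smul hfd X) (hasDerivAt_comp_smul hgd Y) hA1 hA2 hc hlt hpos (by
      intro x y
      have h := (heq (x • X + y • Y)).2.2
      rw [fderiv_add_smul_of_fderiv_eq_zero hfd hfY, add_comm (x • X) (y • Y),
        fderiv_add_smul_of_fderiv_eq_zero hgd hgX] at h
      have hfv : f (x • X) = F₁ (y • Y + x • X) * Y 1 - F₂ (y • Y + x • X) * Y 0 := by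
        rw [← apply_add_smul_of_fderiv_eq_zero hfd hfY (x • X) y, add_comm (x • X), hf]
      have hgv : g (y • Y) = F₂ (y • Y + x • X) * X 0 - F₁ (y • Y + x • X) * X 1 := by
        rw [← apply_add_smul_of_fderiv_eq_zero hgd hgX (y • Y) x, hg]
      rw [hfv, hgv]
      generalize F₁ (y • Y + x • X) = u₁ at h ⊢
      generalize F₂ (y • Y + x • X) = u₂ at h ⊢
      have hq0 : (y • Y + x • X) 0 = y * Y 0 + x * X 0 := by simp
      have hq1 : (y • Y + x • X) 1 = y * Y 1 + x * X 1 := by simp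
      have hexp : Real.exp (y * Y 0 + x * X 0 - 2 * (y * Y 1 + x * X 1)) =
          Real.exp (-(y * Y 1 + x * X 1)) *
            Real.exp ((X 0 - X 1) * x - (X 0 - X 1) * y) := by
        rw [← Real.exp_add]
        congr 1
        linear_combination y * hYc
      simp only [hS, hq0, hq1, hexp] at h
      apply mul_left_cancel₀ (Real.exp_pos (-(y * Y 1 + x * X 1))).ne'
      have hY0 : Y 0 = Y 1 - (X 0 - X 1) := by linarith
      rw [hY0] at h ⊢
      linear_combination h)
  have hzero (q : Fin 2 → ℝ) : F₁ q = 0 ∧ F₂ q = 0 := by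
    obtain ⟨x, y, hxy⟩ : ∃ x y : ℝ, q = x • X + y • Y := by
      refine ⟨(q 0 * Y 1 - q 1 * Y 0) / (X 0 * Y 1 - X 1 * Y 0),
        (X 0 * q 1 - X 1 * q 0) / (X 0 * Y 1 - X 1 * Y 0), ?_⟩
      ext i
      rw [Pi.add_apply, Pi.smul_apply, Pi.smul_apply, smul_eq_mul, smul_eq_mul, div_mul_eq_mul_div,
        div_mul_eq_mul_div, ← add_div, eq_div_iff hdet]
      revert i
      rw [Fin.forall_fin_two]
      constructor <;> ring
    have h1 : f q = 0 := by
      rw [hxy, apply_add_smul_of_fderiv_eq_zero hfd hfY, hf0]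
    have h2 : g q = 0 := by
      rw [hxy, add_comm, apply_add_smul_of_fderiv_eq_zero hgd hgX, hg0]
    rw [hf] at h1
    rw [hg] at h2
    constructor
    · apply mul_left_cancel₀ hdet
      linear_combination X 0 * h1 + Y 0 * h2
    · apply mul_left_cancel₀ hdet
      linear_combination X 1 * h1 + Y 1 * h2
  rcases hne with hne | hne
  · exact hne (funext fun q => (hzero q).1)
  · exact hne (funext fun q => (hzero q).2)
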